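/- Let Ψ be a mass-stationary random measure on ℝ^d and let f : M(ℝ^d) × ℝ^d × ℝ^d → [0,∞) be a translation-covariant measurable function such that for almost every realization, f(Ψ, 0, ·)·Ψ is a probability measure on ℝ^d (i.e. ∫ f(Ψ, 0, y) dΨ(y) = 1 a.s.). If, conditionally on Ψ, a random point o′ is chosen with law f(Ψ, 0, ·)·Ψ, then for every bounded measurable function F : M(ℝ^d) → ℝ one has E[F(T_{o′}Ψ)] = E[F(Ψ) · ∫ f(Ψ, y, 0) dΨ(y)]; that is, the law of T_{o′}Ψ is the law of Ψ biased by f⁻(0) := ∫ f(Ψ, y, 0) dΨ(y). -/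

import Mathlib

open MeasureTheory ENNReal

noncomputable section

/-- `ℝ^d`. -/
abbrev Vec (d : ℕ) := Fin d → ℝ

/-- The shift `T_t ψ`, defined by `(T_t ψ)(A) = ψ(A + t)`. -/
def shiftM {d : ℕ} (t : Vec d) (ψ : Measure (Vec d)) : Measure (Vec d) :=
  ψ.map (fun x => x - t)

/-- A measure is in `M(ℝ^d)` iff it is finite on bounded sets. -/
def BddFinite {d : ℕ} (ψ : Measure (Vec d)) : Prop :=
  ∀ s : Set (Vec d), Bornology.IsBounded s → ψ s < ⊤

/-- Translation covariance of `g : M(ℝ^d) × ℝ^d × ℝ^d → [0,∞]`. -/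
def Covariant3 {d : ℕ} (g : Measure (Vec d) → Vec d → Vec d → ℝ≥0∞) : Prop :=
  ∀ (t x y : Vec d) (ψ : Measure (Vec d)), g (shiftM t ψ) (x - t) (y - t) = g ψ x y

/-- A random measure `Ψ` on a probability space `(Ω, P)` is mass-stationary if the mass
transport principle holds for every translation-covariant measurable `g`. -/
def MassStationary {d : ℕ} {Ω : Type*} [MeasurableSpace Ω] (P : Measure Ω)
    (Ψ : Ω → Measure (Vec d)) : Prop :=
  ∀ g : Measure (Vec d) → Vec d → Vec d → ℝ≥0∞,
    Measurable (fun p : Measure (Vec d) × Vec d × Vec d => g p.1 p.2.1 p.2.2) →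
    Covariant3 g →
    ∫⁻ ω, (∫⁻ y, g (Ψ ω) 0 y ∂(Ψ ω)) ∂P = ∫⁻ ω, (∫⁻ y, g (Ψ ω) y 0 ∂(Ψ ω)) ∂P

lemma aux_shift_apply {d : ℕ} (t : Vec d) (ψ : Measure (Vec d)) {A : Set (Vec d)}
    (hA : MeasurableSet A) : shiftM t ψ A = ψ ((fun x => x - t) ⁻¹' A) := by
  unfold shiftM
  exact Measure.map_apply (by fun_prop) hA

lemma aux_shift_shift {d : ℕ} (t y : Vec d) (ψ : Measure (Vec d)) :
    shiftM (y - t) (shiftM t ψ) = shiftM y ψ := by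
  unfold shiftM
  rw [Measure.map_map (by fun_prop) (by fun_prop)]
  congr 1
  funext x
  simp

lemma aux_shift_zero {d : ℕ} (ψ : Measure (Vec d)) : shiftM 0 ψ = ψ := by
  unfold shiftM
  simp

lemma aux_bdd_iff {d : ℕ} (ψ : Measure (Vec d)) :
    BddFinite ψ ↔ ∀ n : ℕ, ψ (Metric.ball 0 (n : ℝ)) < ⊤ := by
  constructor
  · intro h n
    exact h _ Metric.isBounded_ball
  · intro h s hs
    obtain ⟨r, hr⟩ := hs.subset_ball 0
    obtain ⟨n, hn⟩ := exists_nat_ge r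
    exact (measure_mono (hr.trans (Metric.ball_subset_ball hn))).trans_lt (h n)

lemma aux_bdd_meas {d : ℕ} : MeasurableSet {ψ : Measure (Vec d) | BddFinite ψ} := by
  simp only [aux_bdd_iff, Set.ofPred_forall]
  exact MeasurableSet.iInter fun n =>
    measurableSet_lt (Measure.measurable_coe measurableSet_ball) measurable_const

lemma aux_bdd_shift {d : ℕ} (t : Vec d) (ψ : Measure (Vec d)) (h : BddFinite ψ) :
    BddFinite (shiftM t ψ) := by
  rw [aux_bdd_iff]
  intro n
  rw [aux_shift_apply _ _ measurableSet_ball]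
  apply h
  refine (Metric.isBounded_ball (x := t) (r := n)).subset ?_
  intro x hx
  simpa [dist_eq_norm] using hx

lemma aux_bdd_shift_iff {d : ℕ} (t : Vec d) (ψ : Measure (Vec d)) :
    BddFinite (shiftM t ψ) ↔ BddFinite ψ := by
  refine ⟨fun h => ?_, aux_bdd_shift t ψ⟩
  have := aux_bdd_shift (0 - t) _ h
  rwa [aux_shift_shift, aux_shift_zero] at this

/-- Normalised restriction kernel. -/
def auxKer {d : ℕ} (S : Set (Vec d)) (hS : MeasurableSet S) :
    ProbabilityTheory.Kernel (Measure (Vec d)) (Vec d) where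
  toFun ψ := (ψ S)⁻¹ • ψ.restrict S
  measurable' := by
    refine Measure.measurable_of_measurable_coe _ fun A hA => ?_
    simp only [Measure.smul_apply, Measure.restrict_apply hA, smul_eq_mul]
    exact (Measure.measurable_coe hS).inv.mul (Measure.measurable_coe (hA.inter hS))

instance auxKer_fin {d : ℕ} (S : Set (Vec d)) (hS : MeasurableSet S) :
    ProbabilityTheory.IsFiniteKernel (auxKer S hS) := by
  refine ⟨⟨1, by simp, fun ψ => ?_⟩⟩
  change ((ψ S)⁻¹ • ψ.restrict S) Set.univ ≤ 1
  simp only [Measure.smul_apply, Measure.restrict_apply MeasurableSet.univ, smul_eq_mul,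
    Set.univ_inter]
  exact ENNReal.inv_mul_le_one _

lemma aux_lint_piece {d : ℕ} (S : Set (Vec d)) (hS : MeasurableSet S) (ψ : Measure (Vec d))
    (h : ψ S < ⊤) (u : Vec d → ℝ≥0∞) :
    ∫⁻ z in S, u z ∂ψ = ψ S * ∫⁻ z, u z ∂(auxKer S hS ψ) := by
  change _ = ψ S * ∫⁻ z, u z ∂((ψ S)⁻¹ • ψ.restrict S)
  rw [lintegral_smul_measure, smul_eq_mul, ← mul_assoc]
  by_cases h0 : ψ S = 0
  · simp [h0, Measure.restrict_eq_zero.2 h0]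
  · rw [ENNReal.mul_inv_cancel h0 h.ne, one_mul]

lemma aux_meas {d : ℕ} {β : Type*} [MeasurableSpace β]
    (h : Measure (Vec d) → β → Vec d → ℝ≥0∞)
    (hm : Measurable (fun p : (Measure (Vec d) × β) × Vec d => h p.1.1 p.1.2 p.2)) :
    Measurable (fun p : Measure (Vec d) × β =>
      ({ψ : Measure (Vec d) | BddFinite ψ}.indicator 1 p.1 : ℝ≥0∞) * ∫⁻ z, h p.1 p.2 z ∂p.1) := by
  let S : ℕ → Set (Vec d) := disjointed (fun n : ℕ => Metric.ball 0 (n : ℝ))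
  have hS : ∀ n, MeasurableSet (S n) := fun n =>
    MeasurableSet.disjointed (fun n => measurableSet_ball) n
  have hU : ⋃ n, S n = Set.univ := by
    rw [iUnion_disjointed, Metric.iUnion_ball_nat]
  have key : (fun p : Measure (Vec d) × β =>
      ({ψ : Measure (Vec d) | BddFinite ψ}.indicator 1 p.1 : ℝ≥0∞) * ∫⁻ z, h p.1 p.2 z ∂p.1)
      = fun p => ({ψ : Measure (Vec d) | BddFinite ψ}.indicator 1 p.1 : ℝ≥0∞) *
        ∑' n, p.1 (S n) * ∫⁻ z, h p.1 p.2 z ∂(auxKer (S n) (hS n) p.1) := by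
    funext p
    by_cases hp : BddFinite p.1
    · congr 1
      rw [← setLIntegral_univ, ← hU, lintegral_iUnion hS (disjoint_disjointed _)]
      refine tsum_congr fun n => aux_lint_piece _ _ _ ?_ _
      exact hp _ (Metric.isBounded_ball.subset (disjointed_subset _ n))
    · simp [hp]
  rw [key]
  refine ((measurable_one.indicator aux_bdd_meas).comp measurable_fst).mul ?_
  refine Measurable.ennreal_tsum fun n => ?_
  refine ((Measure.measurable_coe (hS n)).comp measurable_fst).mul ?_
  exact Measurable.lintegral_kernel_prod_right'
    (κ := (auxKer (S n) (hS n)).comap Prod.fst measurable_fst) hm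

/-- The shift, cut off on measures that are not boundedly finite. -/
lemma aux_shift_meas {d : ℕ} (G : Measure (Vec d) → ℝ≥0∞) (hG : Measurable G) :
    Measurable (fun p : Measure (Vec d) × Vec d =>
      ({ψ : Measure (Vec d) | BddFinite ψ}.indicator 1 p.1 : ℝ≥0∞) * G (shiftM p.2 p.1)) := by
  have h1 : Measurable (fun p : Measure (Vec d) × Vec d =>
      ({ψ : Measure (Vec d) | BddFinite ψ}.indicator 1 p.1 : ℝ≥0∞) • shiftM p.2 p.1) := by
    refine Measure.measurable_of_measurable_coe _ fun A hA => ?_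
    have := aux_meas (d := d) (β := Vec d) (fun _ y z => A.indicator 1 (z - y))
      ((measurable_one.indicator hA).comp (by fun_prop))
    convert this using 2 with p
    rw [Measure.smul_apply, smul_eq_mul, aux_shift_apply _ _ hA]
    congr 1
    rw [← lintegral_indicator_one (hA.preimage (by fun_prop))]
    rfl
  have h2 : Measurable (fun p : Measure (Vec d) × Vec d =>
      ({ψ : Measure (Vec d) | BddFinite ψ}.indicator 1 p.1 : ℝ≥0∞)) :=
    (measurable_one.indicator aux_bdd_meas).comp measurable_fst
  convert h2.mul (hG.comp h1) using 2 with p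
  by_cases hp : BddFinite p.1 <;> simp [hp]

lemma aux_mtp {d : ℕ} {Ω : Type*} [MeasurableSpace Ω] (P : Measure Ω)
    (Ψ : Ω → Measure (Vec d))
    (hbf : ∀ᵐ ω ∂P, BddFinite (Ψ ω))
    (hms : MassStationary P Ψ)
    (f : Measure (Vec d) → Vec d → Vec d → ℝ≥0∞)
    (hfm : Measurable (fun p : Measure (Vec d) × Vec d × Vec d => f p.1 p.2.1 p.2.2))
    (hfcov : Covariant3 f) (G : Measure (Vec d) → ℝ≥0∞) (hG : Measurable G) :
    ∫⁻ ω, (∫⁻ y, f (Ψ ω) 0 y * G (shiftM y (Ψ ω)) ∂(Ψ ω)) ∂P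
      = ∫⁻ ω, (∫⁻ y, f (Ψ ω) y 0 * G (Ψ ω) ∂(Ψ ω)) ∂P := by
  have := hms (fun ψ x y => f ψ x y *
    (({ψ : Measure (Vec d) | BddFinite ψ}.indicator 1 ψ : ℝ≥0∞) * G (shiftM y ψ))) ?_ ?_
  · refine Eq.trans ?_ (this.trans ?_)
    · refine lintegral_congr_ae ?_
      filter_upwards [hbf] with ω hω
      simp [hω]
    · refine lintegral_congr_ae ?_
      filter_upwards [hbf] with ω hω
      simp [hω, aux_shift_zero]
  · exact hfm.mul ((aux_shift_meas G hG).comp (g := fun p : Measure (Vec d) × Vec d =>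
      ({ψ : Measure (Vec d) | BddFinite ψ}.indicator 1 p.1 : ℝ≥0∞) * G (shiftM p.2 p.1))
      (f := fun p : Measure (Vec d) × Vec d × Vec d => (p.1, p.2.2)) (by fun_prop))
  · intro t x y ψ
    have := aux_bdd_shift_iff t ψ
    by_cases h : BddFinite ψ <;> simp [hfcov t x y ψ, aux_shift_shift, this, h]

lemma aux_ae {d : ℕ} {Ω : Type*} [MeasurableSpace Ω] (P : Measure Ω)
    (Ψ : Ω → Measure (Vec d)) (hΨm : Measurable Ψ)
    (hbf : ∀ᵐ ω ∂P, BddFinite (Ψ ω)) (h : Measure (Vec d) → Vec d → ℝ≥0∞)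
    (hm : Measurable (fun p : Measure (Vec d) × Vec d =>
      ({ψ : Measure (Vec d) | BddFinite ψ}.indicator 1 p.1 : ℝ≥0∞) * h p.1 p.2)) :
    AEMeasurable (fun ω => ∫⁻ y, h (Ψ ω) y ∂(Ψ ω)) P := by
  have := aux_meas (d := d) (β := Unit) (fun ψ _ y =>
    ({ψ : Measure (Vec d) | BddFinite ψ}.indicator 1 ψ : ℝ≥0∞) * h ψ y)
    (hm.comp (f := fun p : (Measure (Vec d) × Unit) × Vec d => (p.1.1, p.2)) (by fun_prop))
  refine ⟨_, this.comp (f := fun ω => (Ψ ω, ())) (by fun_prop), ?_⟩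
  filter_upwards [hbf] with ω hω
  simp [hω]

/-- Let `Ψ` be a mass-stationary random measure on `ℝ^d` and let
`f : M(ℝ^d) × ℝ^d × ℝ^d → [0,∞)` be translation-covariant and measurable with
`∫ f Ψ 0 y dΨ y = 1` a.s.  If, conditionally on `Ψ`, a new root `o′` is chosen with law
`f Ψ 0 · dΨ`, then for every bounded measurable `F : M(ℝ^d) → ℝ`,
`E[F (T_{o′} Ψ)] = E[F Ψ · f⁻(0)]` where `f⁻(0) = ∫ f Ψ y 0 dΨ y`; i.e. the law of
`T_{o′} Ψ` is the law of `Ψ` biased by `f⁻(0)`. -/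
theorem stmt10 {d : ℕ} {Ω : Type*} [MeasurableSpace Ω] (P : Measure Ω) [IsProbabilityMeasure P]
    (Ψ : Ω → Measure (Vec d)) (hΨm : Measurable Ψ)
    (hbf : ∀ᵐ ω ∂P, BddFinite (Ψ ω))
    (hms : MassStationary P Ψ)
    (f : Measure (Vec d) → Vec d → Vec d → ℝ≥0∞)
    (hfm : Measurable (fun p : Measure (Vec d) × Vec d × Vec d => f p.1 p.2.1 p.2.2))
    (hffin : ∀ (ψ : Measure (Vec d)) (x y : Vec d), f ψ x y < ⊤)
    (hfcov : Covariant3 f)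
    (hprob : ∀ᵐ ω ∂P, (∫⁻ y, f (Ψ ω) 0 y ∂(Ψ ω)) = 1)
    (F : Measure (Vec d) → ℝ) (hFm : Measurable F) (hFb : ∃ C : ℝ, ∀ ψ, |F ψ| ≤ C) :
    ∫ ω, (∫ y, F (shiftM y (Ψ ω)) ∂((Ψ ω).withDensity (fun y => f (Ψ ω) 0 y))) ∂P
      = ∫ ω, F (Ψ ω) * (∫⁻ y, f (Ψ ω) y 0 ∂(Ψ ω)).toReal ∂P := by
  obtain ⟨C, hC⟩ := hFb
  have hC0 : 0 ≤ C := (abs_nonneg _).trans (hC 0)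
  let G : Measure (Vec d) → ℝ≥0∞ := fun ψ => ENNReal.ofReal (F ψ + C)
  have hG : Measurable G := by fun_prop
  have hFC : ∀ ψ, 0 ≤ F ψ + C := fun ψ => by linarith [(abs_le.1 (hC ψ)).1]
  have hGF : ∀ ψ, (G ψ).toReal = F ψ + C := fun ψ => ENNReal.toReal_ofReal (hFC ψ)
  have hGle : ∀ ψ, G ψ ≤ ENNReal.ofReal (2 * C) := fun ψ =>
    ENNReal.ofReal_le_ofReal (by linarith [(abs_le.1 (hC ψ)).2])
  have hI : Measurable (fun p : Measure (Vec d) × Vec d =>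
      ({ψ : Measure (Vec d) | BddFinite ψ}.indicator 1 p.1 : ℝ≥0∞)) :=
    (measurable_one.indicator aux_bdd_meas).comp measurable_fst
  have hf0y : Measurable (fun p : Measure (Vec d) × Vec d => f p.1 0 p.2) :=
    hfm.comp (f := fun p : Measure (Vec d) × Vec d => (p.1, (0 : Vec d), p.2)) (by fun_prop)
  have hfy0 : Measurable (fun p : Measure (Vec d) × Vec d => f p.1 p.2 0) :=
    hfm.comp (f := fun p : Measure (Vec d) × Vec d => (p.1, p.2, (0 : Vec d))) (by fun_prop)
  have hf0y' : ∀ ψ, Measurable (fun y : Vec d => f ψ 0 y) := fun ψ =>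
    hf0y.comp (f := fun y : Vec d => (ψ, y)) (by fun_prop)
  have hfy0' : ∀ ψ, Measurable (fun y : Vec d => f ψ y 0) := fun ψ =>
    hfy0.comp (f := fun y : Vec d => (ψ, y)) (by fun_prop)
  let a : Ω → ℝ≥0∞ := fun ω => ∫⁻ y, f (Ψ ω) 0 y * G (shiftM y (Ψ ω)) ∂(Ψ ω)
  let b : Ω → ℝ≥0∞ := fun ω => ∫⁻ y, f (Ψ ω) y 0 ∂(Ψ ω)
  have ham : AEMeasurable a P := by
    refine aux_ae P Ψ hΨm hbf (fun ψ y => f ψ 0 y * G (shiftM y ψ)) ?_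
    convert hf0y.mul (aux_shift_meas G hG) using 2 with p
    simp only [Pi.mul_apply]
    ring
  have hbm : AEMeasurable b P := aux_ae P Ψ hΨm hbf (fun ψ y => f ψ y 0) (hI.mul hfy0)
  have hb1 : ∫⁻ ω, b ω ∂P = 1 := by
    have := aux_mtp P Ψ hbf hms f hfm hfcov 1 measurable_one
    simp only [Pi.one_apply, mul_one] at this
    rw [← this, lintegral_congr_ae hprob]
    simp
  have hbfin : ∀ᵐ ω ∂P, b ω < ⊤ := ae_lt_top' hbm (by simp [hb1])
  have hab : ∫⁻ ω, a ω ∂P = ∫⁻ ω, G (Ψ ω) * b ω ∂P := by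
    rw [aux_mtp P Ψ hbf hms f hfm hfcov G hG]
    refine lintegral_congr fun ω => ?_
    rw [lintegral_mul_const _ (hfy0' _), mul_comm]
  have hale : ∀ᵐ ω ∂P, a ω ≤ ENNReal.ofReal (2 * C) := by
    filter_upwards [hprob] with ω hω
    calc a ω ≤ ∫⁻ y, f (Ψ ω) 0 y * ENNReal.ofReal (2 * C) ∂(Ψ ω) :=
          lintegral_mono fun y => by gcongr; exact hGle _
      _ = _ := by rw [lintegral_mul_const _ (hf0y' _), hω, one_mul]
  have hafin : ∀ᵐ ω ∂P, a ω < ⊤ := hale.mono fun ω h => h.trans_lt ENNReal.ofReal_lt_top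
  have haint : ∫⁻ ω, a ω ∂P ≠ ⊤ := by
    refine ((lintegral_mono_ae hale).trans_lt ?_).ne
    simp [ENNReal.mul_lt_top]
  have hL : ∀ᵐ ω ∂P, (∫ y, F (shiftM y (Ψ ω)) ∂((Ψ ω).withDensity (fun y => f (Ψ ω) 0 y)))
      = (a ω).toReal - C := by
    filter_upwards [hbf, hprob] with ω hω hp
    have hν : IsProbabilityMeasure ((Ψ ω).withDensity (fun y => f (Ψ ω) 0 y)) :=
      ⟨by rw [withDensity_apply _ MeasurableSet.univ, setLIntegral_univ, hp]⟩
    have hGm : Measurable (fun y => G (shiftM y (Ψ ω))) := by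
      have := (aux_shift_meas G hG).comp (f := fun y : Vec d => (Ψ ω, y)) (by fun_prop)
      simpa [Function.comp_def, hω] using this
    have hFe : (fun y => F (shiftM y (Ψ ω))) = fun y => (G (shiftM y (Ψ ω))).toReal - C := by
      funext y
      rw [hGF]; ring
    have hGt : ∀ y, G (shiftM y (Ψ ω)) < ⊤ := fun y => ENNReal.ofReal_lt_top
    have hlin : ∫⁻ y, G (shiftM y (Ψ ω)) ∂((Ψ ω).withDensity (fun y => f (Ψ ω) 0 y)) = a ω :=
      lintegral_withDensity_eq_lintegral_mul _ (hf0y' _) hGm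
    have hint : Integrable (fun y => (G (shiftM y (Ψ ω))).toReal)
        ((Ψ ω).withDensity (fun y => f (Ψ ω) 0 y)) := by
      refine integrable_toReal_of_lintegral_ne_top hGm.aemeasurable ?_
      refine ((lintegral_mono fun y => hGle _).trans_lt ?_).ne
      simp [ENNReal.mul_lt_top]
    rw [hFe, integral_sub hint (integrable_const _), integral_toReal hGm.aemeasurable
      (Filter.Eventually.of_forall hGt), hlin]
    simp
  have hGbm : AEMeasurable (fun ω => G (Ψ ω) * b ω) P := (hG.comp hΨm).aemeasurable.mul hbm
  have hGbfin : ∀ᵐ ω ∂P, G (Ψ ω) * b ω < ⊤ :=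
    hbfin.mono fun ω h => ENNReal.mul_lt_top ENNReal.ofReal_lt_top h
  have hR : ∀ ω, F (Ψ ω) * (b ω).toReal = (G (Ψ ω) * b ω).toReal - C * (b ω).toReal := by
    intro ω
    rw [ENNReal.toReal_mul, hGF]; ring
  rw [integral_congr_ae hL]
  change _ = ∫ ω, F (Ψ ω) * (b ω).toReal ∂P
  simp only [hR]
  rw [integral_sub (integrable_toReal_of_lintegral_ne_top ham haint) (integrable_const _),
    integral_sub (integrable_toReal_of_lintegral_ne_top hGbm (hab ▸ haint))
      ((integrable_toReal_of_lintegral_ne_top hbm (by simp [hb1])).const_mul _),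
    integral_const_mul, integral_toReal ham hafin, integral_toReal hGbm hGbfin,
    integral_toReal hbm hbfin, hab, hb1]
  simp
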